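/- Fix n ≥ 1 and any injective function Φ from projective dependency trees on n words to binary head trees with n leaves satisfying bht2dep(Φ(t)) = t for all projective t. Then the composite encoding t ↦ hexatags(Φ(t)) is an injective map from the set of projective dependency trees on n words into the set of hexatag lists of length 2n − 1, and full decoding recovers the tree: for every projective dependency tree t on n words, the run of tags2bht on hexatags(Φ(t)) succeeds with output Φ(t), and bht2dep applied to that output equals t. -/

import Mathlib

/-- Binary head trees (BHTs). -/
inductive BHT : Type where
  | leaf : BHT
  | nodeL (l r : BHT) : BHT
  | nodeR (l r : BHT) : BHT

/-- Number of leaves of a BHT. -/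
def BHT.numLeaves : BHT → ℕ
  | .leaf => 1
  | .nodeL l r => l.numLeaves + r.numLeaves
  | .nodeR l r => l.numLeaves + r.numLeaves

/-- Head position of a BHT whose span of leaf positions starts at `i`. -/
def BHT.headAt : BHT → ℕ → ℕ
  | .leaf, i => i
  | .nodeL l _, i => l.headAt i
  | .nodeR l r, i => r.headAt (i + l.numLeaves)

/-- Head position of a BHT placed over positions `0, …, numLeaves - 1`. -/
def BHT.head (T : BHT) : ℕ := T.headAt 0

/-- Arc set of a BHT whose span of leaf positions starts at `i`. -/
def BHT.arcsAt : BHT → ℕ → Set (ℕ × ℕ)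
  | .leaf, _ => ∅
  | .nodeL l r, i =>
      insert (l.headAt i, r.headAt (i + l.numLeaves)) (l.arcsAt i ∪ r.arcsAt (i + l.numLeaves))
  | .nodeR l r, i =>
      insert (r.headAt (i + l.numLeaves), l.headAt i) (l.arcsAt i ∪ r.arcsAt (i + l.numLeaves))

/-- Arc set of a BHT placed over positions `0, …, numLeaves - 1`. -/
def BHT.arcs (T : BHT) : Set (ℕ × ℕ) := T.arcsAt 0

/-- `S` is a subtree of `T` (placed over positions `0, …, numLeaves - 1`) whose
leaf span starts at absolute position `i`. -/
inductive BHT.SubtreeAt : BHT → ℕ → BHT → Prop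
  | refl (T : BHT) : BHT.SubtreeAt T 0 T
  | inlL (l r S : BHT) (i : ℕ) : BHT.SubtreeAt l i S → BHT.SubtreeAt (BHT.nodeL l r) i S
  | inrL (l r S : BHT) (i : ℕ) :
      BHT.SubtreeAt r i S → BHT.SubtreeAt (BHT.nodeL l r) (l.numLeaves + i) S
  | inlR (l r S : BHT) (i : ℕ) : BHT.SubtreeAt l i S → BHT.SubtreeAt (BHT.nodeR l r) i S
  | inrR (l r S : BHT) (i : ℕ) :
      BHT.SubtreeAt r i S → BHT.SubtreeAt (BHT.nodeR l r) (l.numLeaves + i) S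

/-- `bht2dep T j = some i` if `i` is the unique position with `(i, j) ∈ arcs T`,
and `none` if `j` has no incoming arc. -/
noncomputable def bht2dep (n : ℕ) (T : BHT) : Fin n → Option (Fin n) := fun j =>
  letI := Classical.dec (∃! i : Fin n, ((i : ℕ), (j : ℕ)) ∈ T.arcs)
  if h : ∃! i : Fin n, ((i : ℕ), (j : ℕ)) ∈ T.arcs then some h.choose else none

/-- `head` is a dependency tree on `n` words: exactly one root (position with
`head r = none`), and every position reaches the root by iterating `head`. -/
def IsDepTree {n : ℕ} (head : Fin n → Option (Fin n)) : Prop :=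
  ∃ r : Fin n, head r = none ∧ (∀ r' : Fin n, head r' = none → r' = r) ∧
    ∀ j : Fin n, Relation.ReflTransGen (fun a b => head a = some b) j r

/-- A dependency tree is projective if every position's set of descendants is an
interval of consecutive positions. -/
def Projective {n : ℕ} (head : Fin n → Option (Fin n)) : Prop :=
  ∀ i : Fin n, ∃ a b : Fin n,
    ∀ j : Fin n, Relation.ReflTransGen (fun x y => head x = some y) j i ↔ (a ≤ j ∧ j ≤ b)

/-- The six hexatags: `tL`/`tR` are terminal tags (leaf that is a left/right child);
`leftL`/`leftR` are `⇐L`/`⇐R` (internal left child with head-label L/R);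
`rightL`/`rightR` are `⇒L`/`⇒R` (internal right child with head-label L/R). -/
inductive Hexatag : Type where
  | tL | tR | leftL | leftR | rightL | rightR
deriving DecidableEq

/-- A hexatag is terminal if it is `tL` or `tR`. -/
def Hexatag.isTerminal : Hexatag → Prop
  | .tL => True
  | .tR => True
  | _ => False

/-- In-order linearization; the Boolean records whether the current subtree is a
right child of its parent (the root counts as a left child by convention). -/
def BHT.hexatagsAux : BHT → Bool → List Hexatag
  | .leaf, false => [.tL]
  | .leaf, true => [.tR]
  | .nodeL l r, b =>
      l.hexatagsAux false ++ (if b then Hexatag.rightL else Hexatag.leftL) :: r.hexatagsAux true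
  | .nodeR l r, b =>
      l.hexatagsAux false ++ (if b then Hexatag.rightR else Hexatag.leftR) :: r.hexatagsAux true

/-- The hexatag linearization of a BHT. -/
def BHT.hexatags (T : BHT) : List Hexatag := T.hexatagsAux false

/-- The tags emitted for the leaves of a BHT, in left-to-right order. -/
def BHT.leafTagsAux : BHT → Bool → List Hexatag
  | .leaf, false => [.tL]
  | .leaf, true => [.tR]
  | .nodeL l r, _ => l.leafTagsAux false ++ r.leafTagsAux true
  | .nodeR l r, _ => l.leafTagsAux false ++ r.leafTagsAux true

/-- The tags emitted for the leaves of a BHT in left-to-right order (root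
counts as a left child by convention). -/
def BHT.leafTags (T : BHT) : List Hexatag := T.leafTagsAux false

/-- Partial BHTs: binary head trees possibly containing a dummy placeholder. -/
inductive PBHT : Type where
  | dummy : PBHT
  | leaf : PBHT
  | nodeL (l r : PBHT) : PBHT
  | nodeR (l r : PBHT) : PBHT
deriving DecidableEq

/-- Does a partial BHT contain a dummy? -/
def PBHT.hasDummy : PBHT → Bool
  | .dummy => true
  | .leaf => false
  | .nodeL l r => l.hasDummy || r.hasDummy
  | .nodeR l r => l.hasDummy || r.hasDummy

/-- Substitute `u` for the dummy in a partial BHT. -/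
def PBHT.subst : PBHT → PBHT → PBHT
  | .dummy, u => u
  | .leaf, _ => .leaf
  | .nodeL l r, u => .nodeL (l.subst u) (r.subst u)
  | .nodeR l r, u => .nodeR (l.subst u) (r.subst u)

/-- One step of the left-corner decoder on a stack of partial BHTs. -/
def hexStep : List PBHT → Hexatag → Option (List PBHT)
  | st, .tL => some (.leaf :: st)
  | t :: st, .tR => if t.hasDummy then some (t.subst .leaf :: st) else none
  | t :: st, .leftL => some (.nodeL t .dummy :: st)
  | t :: st, .leftR => some (.nodeR t .dummy :: st)
  | t :: u :: st, .rightL =>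
      if u.hasDummy then some (u.subst (.nodeL t .dummy) :: st) else none
  | t :: u :: st, .rightR =>
      if u.hasDummy then some (u.subst (.nodeR t .dummy) :: st) else none
  | _, _ => none

/-- The left-corner decoder: run the stack operations; succeed iff every
operation is defined and the final stack is a single dummy-free tree. -/
def tags2bht (τ : List Hexatag) : Option PBHT :=
  match τ.foldlM hexStep ([] : List PBHT) with
  | some [t] => if t.hasDummy then none else some t
  | _ => none

/-- Embedding of BHTs into partial BHTs. -/
def BHT.toPBHT : BHT → PBHT
  | .leaf => .leaf
  | .nodeL l r => .nodeL l.toPBHT r.toPBHT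
  | .nodeR l r => .nodeR l.toPBHT r.toPBHT

/-- Stack-count increment of a hexatag. -/
def Hexatag.delta : Hexatag → ℤ
  | .tL => 1
  | .tR => 0
  | .leftL => 0
  | .leftR => 0
  | .rightL => -1
  | .rightR => -1

/-- Running stack count `sₖ` after the first `k` tags of `τ`. -/
def stackCount (τ : List Hexatag) (k : ℕ) : ℤ :=
  ((τ.take k).map Hexatag.delta).sum

/-- Validity of a hexatag list (0-indexed: Lean index `k` is 1-indexed position `k+1`). -/
def ValidTags (τ : List Hexatag) : Prop :=
  (τ.length % 2 = 1 ∧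
    ∀ k : ℕ, ∀ t : Hexatag, τ[k]? = some t →
      (k % 2 = 0 → t.isTerminal) ∧ (k % 2 = 1 → ¬ t.isTerminal)) ∧
  τ[0]? = some Hexatag.tL ∧
  (∀ k : ℕ, ∀ t : Hexatag, τ[k]? = some t →
    (t = Hexatag.rightL ∨ t = Hexatag.rightR) → 2 ≤ stackCount τ k) ∧
  stackCount τ τ.length = 1

/-! Decoding inverts linearization because of an invariant on the stack, proved for left and right
children simultaneously: reading the tags of a left child `T` pushes `T` on any stack, and reading
the tags of a right child `T` plugs `T` into the dummy of the tree on top of the stack. For an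
internal node with children `l` and `r`, the tags of `l` push `l`, the tag of the node leaves a
partial tree with a dummy in the place of `r`, and the tags of `r` fill that dummy. So `tags2bht`
returns every tree from its hexatags; in particular, hexatags determine the tree. -/

namespace PBHT

theorem subst_of_hasDummy_eq_false {t : PBHT} (ht : t.hasDummy = false) (u : PBHT) :
    t.subst u = t := by
  induction t with
  | dummy => cases ht
  | leaf => rfl
  | nodeL l r ihl ihr | nodeR l r ihl ihr =>
    obtain ⟨hl, hr⟩ := Bool.or_eq_false_iff.1 ht
    simp only [subst, ihl hl, ihr hr]

@[simp]
theorem hasDummy_subst (t u : PBHT) : (t.subst u).hasDummy = (t.hasDummy && u.hasDummy) := by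
  induction t with
  | dummy | leaf => rfl
  | nodeL l r ihl ihr | nodeR l r ihl ihr =>
    simp only [subst, hasDummy, ihl, ihr, Bool.and_or_distrib_right]

theorem subst_assoc (t u v : PBHT) : (t.subst u).subst v = t.subst (u.subst v) := by
  induction t with
  | dummy | leaf => rfl
  | nodeL l r ihl ihr | nodeR l r ihl ihr => simp only [subst, ihl, ihr]

end PBHT

namespace BHT

@[simp]
theorem hasDummy_toPBHT (T : BHT) : T.toPBHT.hasDummy = false := by
  induction T with
  | leaf => rfl
  | nodeL l r ihl ihr | nodeR l r ihl ihr =>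
    simp only [toPBHT, PBHT.hasDummy, ihl, ihr, Bool.or_self]

@[simp]
theorem subst_toPBHT (T : BHT) (u : PBHT) : T.toPBHT.subst u = T.toPBHT :=
  PBHT.subst_of_hasDummy_eq_false T.hasDummy_toPBHT u

theorem toPBHT_injective : Function.Injective toPBHT := by
  intro S
  induction S with
  | leaf =>
    intro T h
    cases T with
    | leaf => rfl
    | nodeL | nodeR => cases h
  | nodeL l r ihl ihr =>
    intro T h
    cases T with
    | nodeL l' r' =>
      obtain ⟨hl, hr⟩ := PBHT.nodeL.inj h
      rw [ihl hl, ihr hr]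
    | leaf | nodeR => cases h
  | nodeR l r ihl ihr =>
    intro T h
    cases T with
    | nodeR l' r' =>
      obtain ⟨hl, hr⟩ := PBHT.nodeR.inj h
      rw [ihl hl, ihr hr]
    | leaf | nodeL => cases h

theorem length_hexatagsAux_add_one (T : BHT) (isRight : Bool) :
    (T.hexatagsAux isRight).length + 1 = 2 * T.numLeaves := by
  induction T generalizing isRight with
  | leaf => cases isRight <;> rfl
  | nodeL l r ihl ihr | nodeR l r ihl ihr =>
    simp only [hexatagsAux, numLeaves, List.length_append, List.length_cons]
    linarith [ihl false, ihr true]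

theorem length_hexatags (T : BHT) : T.hexatags.length = 2 * T.numLeaves - 1 :=
  Nat.eq_sub_of_add_eq (T.length_hexatagsAux_add_one false)

mutual

theorem foldlM_hexatagsAux_false (T : BHT) (st : List PBHT) :
    (T.hexatagsAux false).foldlM hexStep st = some (T.toPBHT :: st) := by
  match T with
  | leaf => rfl
  | nodeL l r | nodeR l r =>
    simp [hexatagsAux, toPBHT, hexStep, PBHT.subst, PBHT.hasDummy,
      foldlM_hexatagsAux_false l, foldlM_hexatagsAux_true r]

theorem foldlM_hexatagsAux_true (T : BHT) {u : PBHT} (hu : u.hasDummy = true) (st : List PBHT) :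
    (T.hexatagsAux true).foldlM hexStep (u :: st) = some (u.subst T.toPBHT :: st) := by
  match T with
  | leaf => simp [hexatagsAux, toPBHT, hexStep, hu]
  | nodeL l r | nodeR l r =>
    simp [hexatagsAux, toPBHT, hexStep, PBHT.subst, PBHT.hasDummy, PBHT.subst_assoc, hu,
      foldlM_hexatagsAux_false l, foldlM_hexatagsAux_true r]

end

theorem tags2bht_hexatags (T : BHT) : tags2bht T.hexatags = some T.toPBHT := by
  simp only [tags2bht, hexatags, foldlM_hexatagsAux_false, hasDummy_toPBHT, Bool.false_eq_true,
    if_false]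

theorem hexatags_injective : Function.Injective hexatags := by
  have tags2bht_comp_hexatags : tags2bht ∘ hexatags = some ∘ toPBHT := funext tags2bht_hexatags
  refine Function.Injective.of_comp (f := tags2bht) ?_
  rw [tags2bht_comp_hexatags]
  exact (Option.some_injective PBHT).comp toPBHT_injective

end BHT

theorem encode_decode_projective (n : ℕ) (hn : 1 ≤ n)
    (Φ : {t : Fin n → Option (Fin n) // IsDepTree t ∧ Projective t} → BHT)
    (hΦinj : Function.Injective Φ)
    (hΦn : ∀ t, (Φ t).numLeaves = n)
    (hΦdep : ∀ t, bht2dep n (Φ t) = t.val) :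
    Function.Injective (fun t : {t : Fin n → Option (Fin n) // IsDepTree t ∧ Projective t} =>
      (Φ t).hexatags) ∧
    (∀ t : {t : Fin n → Option (Fin n) // IsDepTree t ∧ Projective t},
      ((Φ t).hexatags).length = 2 * n - 1) ∧
    (∀ t : {t : Fin n → Option (Fin n) // IsDepTree t ∧ Projective t},
      tags2bht (Φ t).hexatags = some (Φ t).toPBHT ∧ bht2dep n (Φ t) = t.val) := by
  refine ⟨BHT.hexatags_injective.comp hΦinj, fun t => ?_, fun t => ⟨?_, hΦdep t⟩⟩
  · rw [BHT.length_hexatags, hΦn]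
  · exact BHT.tags2bht_hexatags (Φ t)
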